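/- For any a = (a_1,…,a_n) ∈ ℂ^n, let I_a ⊂ ℂ[z_1,…,z_n] be the ideal generated by σ_s(z) − a_s for s = 1,…,n, where σ_s is the s-th elementary symmetric polynomial. Then the quotient ℂ[z_1,…,z_n]/I_a, with its induced S_n-action, is isomorphic as an S_n-representation to the regular representation ℂ[S_n]. -/

import Mathlib

/-!
The character of `Sₙ` on `R/I`, where `R = ℂ[z₁,…,zₙ]`, is that of the regular representation: its value
is `n!` at the identity and `0` elsewhere. It can be computed simultaneously for all `a`, over the
subring `A` of symmetric polynomials.

Each `zᵢ` is a root of the monic polynomial `∏ (X - zⱼ)` over `A`, so adjoining the roots one at a time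
shows that `n!` elements `b` span `R` over `A` (`exists_span_factorial`). The square matrix `E = (τ(bᵢ))`,
with `τ` in `Sₙ`, has nonzero determinant by Dedekind's independence of characters
(`det_orbit_ne_zero`). Hence the `bᵢ` form an `A`-basis of `R` (`exists_basis`), and `E` conjugates
the matrix of `σ` over `A` to the permutation matrix of `τ ↦ τσ`, which has trace `0` when `σ ≠ 1`
(`trace_eq_zero`).

The basis reduces to a basis of `R/I`, and the matrix of `σ` on `R/I` is the matrix over `A` evaluated at
`a` (`exists_fiber_coordinates`), so its trace is `0` as well. Finally, for `V` with this
character, `dim Hom_G(U, V) = dim U` for every `U`, which determines `V` up to isomorphism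
(`exists_equiv_of_finrank_hom`, `exists_equiv_leftRegular`).
-/

/-! ### Spanning by `n!` elements -/

/-- If `z 0` already comes from `A'`, it can be dropped from the generators over `A'`. -/
theorem adjoin_succ_eq_top {A A' B : Type} [CommRing A] [CommRing A'] [CommRing B] [Algebra A A']
    [Algebra A B] [Algebra A' B] [IsScalarTower A A' B] {n : ℕ} (z : Fin (n + 1) → B) (r : A')
    (hr : algebraMap A' B r = z 0) (hgen : Algebra.adjoin A (Set.range z) = ⊤) :
    Algebra.adjoin A' (Set.range fun i : Fin n => z i.succ) = ⊤ := by
  have hle : Algebra.adjoin A (Set.range z) ≤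
      (Algebra.adjoin A' (Set.range fun i : Fin n => z i.succ)).restrictScalars A := by
    refine Algebra.adjoin_le ?_
    rintro _ ⟨i, rfl⟩
    rw [SetLike.mem_coe, Subalgebra.mem_restrictScalars]
    induction i using Fin.cases with
    | zero => exact hr ▸ Subalgebra.algebraMap_mem _ r
    | succ j => exact Algebra.subset_adjoin ⟨j, rfl⟩
  rw [hgen] at hle
  exact eq_top_iff.2 fun x _ => hle (Algebra.mem_top (x := x))

theorem span_smul_eq_top {A A' B ι κ : Type} [CommRing A] [CommRing A'] [CommRing B] [Algebra A A']
    [Algebra A B] [Algebra A' B] [IsScalarTower A A' B] (c : κ → A') (b : ι → B)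
    (hc : Submodule.span A (Set.range c) = ⊤) (hb : Submodule.span A' (Set.range b) = ⊤) :
    Submodule.span A (Set.range fun p : κ × ι => c p.1 • b p.2) = ⊤ := by
  have h := Submodule.span_smul_of_span_eq_top hc (Set.range b)
  rw [hb, Submodule.restrictScalars_top] at h
  rw [← h]
  congr 1
  ext x
  simp [Set.mem_smul]

open Polynomial in
/-- If a monic `P` over `A` splits over `B` as `∏ (X - zᵢ)` and the `zᵢ` generate `B` as an
`A`-algebra, then `n!` elements span `B` over `A`. Adjoining the root `z₀` through
`A[X]/(P)`, which is free of rank `n`, leaves the cofactor of `X - z₀`, of degree `n - 1`, to which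
induction applies. -/
theorem exists_span_factorial (n : ℕ) : ∀ (A B : Type) [CommRing A] [CommRing B] [Nontrivial B]
    [Algebra A B] (P : A[X]) (z : Fin n → B), P.Monic →
    P.map (algebraMap A B) = ∏ i, (X - C (z i)) →
    Algebra.adjoin A (Set.range z) = ⊤ →
    ∃ (ι : Type) (_ : Fintype ι) (b : ι → B), Fintype.card ι = n.factorial ∧
      Submodule.span A (Set.range b) = ⊤ := by
  induction n with
  | zero =>
    intro A B _ _ _ _ P z _ _ hgen
    refine ⟨Unit, inferInstance, fun _ => 1, by simp, ?_⟩
    have h : Set.range z = ∅ := Set.range_eq_empty z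
    rw [h, Algebra.adjoin_empty] at hgen
    rw [Set.range_const, ← Submodule.one_eq_span, ← Algebra.toSubmodule_bot, hgen,
      Algebra.top_toSubmodule]
  | succ n ih =>
    intro A B _ _ _ _ P z hP hprod hgen
    have hA : Nontrivial A := (algebraMap A B).domain_nontrivial
    have hdeg : P.natDegree = n + 1 := by
      rw [← hP.natDegree_map (algebraMap A B), hprod, natDegree_finsetProd_X_sub_C_eq_card]
      simp
    have hroot : P.eval₂ (Algebra.ofId A B : A →ₐ[A] B) (z 0) = 0 := by
      have : (P.map (algebraMap A B)).eval (z 0) = 0 := by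
        rw [hprod, eval_prod, Fin.prod_univ_succ]
        simp
      rw [eval_map] at this
      exact this
    let f : AdjoinRoot P →ₐ[A] B := AdjoinRoot.liftAlgHom P (Algebra.ofId A B) (z 0) hroot
    have hf0 : f (AdjoinRoot.root P) = z 0 := by simp [f]
    let : Algebra (AdjoinRoot P) B := f.toRingHom.toAlgebra
    have hfa : ∀ x, algebraMap (AdjoinRoot P) B x = f x := fun _ => rfl
    have : IsScalarTower A (AdjoinRoot P) B := IsScalarTower.of_algebraMap_eq' (by
      ext x
      rw [RingHom.comp_apply, hfa, f.commutes])
    obtain ⟨Q, hQ⟩ : (X - C (AdjoinRoot.root P)) ∣ P.map (AdjoinRoot.of P) :=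
      dvd_iff_isRoot.2 (AdjoinRoot.isRoot_root P)
    have hQm : Q.Monic := (monic_X_sub_C _).of_mul_monic_left (hQ ▸ hP.map _)
    have hQp : Q.map (algebraMap (AdjoinRoot P) B) = ∏ i : Fin n, (X - C (z i.succ)) := by
      have h := congrArg (Polynomial.map (algebraMap (AdjoinRoot P) B)) hQ
      rw [Polynomial.map_map, ← AdjoinRoot.algebraMap_eq, ← IsScalarTower.algebraMap_eq, hprod,
        Fin.prod_univ_succ, Polynomial.map_mul] at h
      simp only [Polynomial.map_sub, map_X, map_C, hfa, hf0] at h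
      exact ((monic_X_sub_C (z 0)).isRegular.left h).symm
    have hgen' : Algebra.adjoin (AdjoinRoot P) (Set.range fun i : Fin n => z i.succ) = ⊤ :=
      adjoin_succ_eq_top z (AdjoinRoot.root P) (by rw [hfa, hf0]) hgen
    obtain ⟨ι, _, b, hcard, hb⟩ := ih (AdjoinRoot P) B Q (fun i => z i.succ) hQm hQp hgen'
    let pb := AdjoinRoot.powerBasis' hP
    refine ⟨Fin pb.dim × ι, inferInstance, fun p => pb.basis p.1 • b p.2, ?_, ?_⟩
    · rw [Fintype.card_prod, hcard, Fintype.card_fin, AdjoinRoot.powerBasis'_dim, hdeg,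
        Nat.factorial_succ]
    · exact span_smul_eq_top pb.basis b pb.basis.span_eq hb

/-! ### The matrix of conjugates of a spanning family -/

section
variable {A R G : Type} [CommRing A] [CommRing R] [IsDomain R] [Algebra A R]
  [Group G] [Fintype G] [DecidableEq G] (θ : G →* (R →ₐ[A] R))

/-- A vector annihilated by the matrix `(θ_τ (b i))` gives a linear relation among the `θ_τ`, since
they are `A`-linear and `b` spans; Dedekind's independence of characters excludes this. -/
theorem det_orbit_ne_zero (hθ : Function.Injective θ) (b : G → R)
    (hb : Submodule.span A (Set.range b) = ⊤) :
    (Matrix.of fun i τ => θ τ (b i)).det ≠ 0 := by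
  intro h0
  obtain ⟨v, hv, hv0⟩ := Matrix.exists_mulVec_eq_zero_iff.2 h0
  have key : ∀ f : R, ∑ τ, θ τ f * v τ = 0 := by
    intro f
    have hf : f ∈ Submodule.span A (Set.range b) := hb ▸ Submodule.mem_top
    induction hf using Submodule.span_induction with
    | mem x hx =>
      obtain ⟨i, rfl⟩ := hx
      exact congrFun hv0 i
    | zero => simp
    | add x y _ _ hx hy => simp [add_mul, Finset.sum_add_distrib, hx, hy]
    | smul c x _ hx => simp [← Finset.smul_sum, hx]
  have hli := (linearIndependent_monoidHom R R).comp
    (fun τ : G => ((θ τ : R →ₐ[A] R) : R →* R)) (fun σ τ h => hθ (by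
      ext x
      exact DFunLike.congr_fun h x))
  refine hv (funext fun τ => ?_)
  refine Fintype.linearIndependent_iff.1 hli v ?_ τ
  funext f
  simpa [mul_comm] using key f

theorem linearIndependent_of_span (hθ : Function.Injective θ)
    (hA : Function.Injective (algebraMap A R)) (b : G → R)
    (hb : Submodule.span A (Set.range b) = ⊤) : LinearIndependent A b := by
  rw [Fintype.linearIndependent_iff]
  intro c hc i
  have h := Matrix.eq_zero_of_vecMul_eq_zero (det_orbit_ne_zero θ hθ b hb)
    (v := fun i => algebraMap A R (c i)) (by
      funext τ
      have := congrArg (θ τ) hc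
      simpa [Matrix.vecMul, dotProduct, Algebra.smul_def] using this)
  exact hA (by simpa using congrFun h i)

/-- If `T` is the matrix of `θ_σ` and `E = (θ_τ (b i))`, then `Tᵀ E` is `E` with its columns permuted
by `τ ↦ τσ`. So `Tᵀ` is conjugate, over the fraction field, to a permutation matrix without
fixed points. -/
theorem trace_eq_zero (hθ : Function.Injective θ)
    (hA : Function.Injective (algebraMap A R)) (b : Module.Basis G A R) (σ : G) (hσ : σ ≠ 1) :
    (LinearMap.toMatrix b b (θ σ).toLinearMap).trace = 0 := by
  set T := LinearMap.toMatrix b b (θ σ).toLinearMap with hT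
  set E : Matrix G G R := Matrix.of fun i τ => θ τ (b i) with hE
  have hdet : E.det ≠ 0 := det_orbit_ne_zero θ hθ b b.span_eq
  have hTE : (T.map (algebraMap A R)).transpose * E = E.submatrix id (· * σ) := by
    ext j τ
    have h1 : θ σ (b j) = ∑ i, T i j • b i := by
      rw [← b.sum_repr (θ σ (b j))]
      simp [hT, LinearMap.toMatrix_apply]
    have h2 := congrArg (θ τ) h1
    simp only [map_sum, map_smul] at h2
    simp only [Matrix.mul_apply, Matrix.transpose_apply, Matrix.map_apply, hE, Matrix.of_apply,
      Matrix.submatrix_apply, id, map_mul, AlgHom.mul_apply, h2, Algebra.smul_def]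
  -- The adjugate stands in for the inverse of `E`, which avoids passing to the fraction field.
  have h3 : E.det * algebraMap A R T.trace = 0 := by
    calc E.det * algebraMap A R T.trace
        = ((T.map (algebraMap A R)).transpose * (E * E.adjugate)).trace := by
          rw [Matrix.mul_adjugate, Matrix.mul_smul, mul_one, Matrix.trace_smul,
            Matrix.trace_transpose, smul_eq_mul]
          simp [Matrix.trace]
      _ = (E.adjugate * E.submatrix id (· * σ)).trace := by
          rw [← mul_assoc, hTE, Matrix.trace_mul_comm]
      _ = ∑ τ, (E.adjugate * E) τ (τ * σ) := by
          simp [Matrix.trace, Matrix.mul_apply]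
      _ = 0 := by
          simp [Matrix.adjugate_mul, hσ]
  exact hA (by simpa [hdet] using h3)
end

/-! ### Representations with the character of the regular representation -/

section
open Representation
variable {k G V W : Type} [Field k] [Group G] [Fintype G]
  [AddCommGroup V] [Module k V] [AddCommGroup W] [Module k W]

/-- An equivariant map has an equivariant quasi-inverse: average a linear one over the group. -/
theorem exists_quasiInverse [NeZero (Fintype.card G : k)]
    (ρ : Representation k G V) (σ : Representation k G W) (f : IntertwiningMap ρ σ) :
    ∃ s : IntertwiningMap σ ρ, ∀ v, f (s (f v)) = f v := by
  obtain ⟨s₀, hs₀⟩ : ∃ s₀ : W →ₗ[k] V, ∀ v, f (s₀ (f v)) = f v := by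
    obtain ⟨r, hr⟩ := f.toLinearMap.rangeRestrict.exists_rightInverse_of_surjective
      (LinearMap.range_rangeRestrict _)
    obtain ⟨q, hq⟩ := (LinearMap.range f.toLinearMap).subtype.exists_leftInverse_of_injective
      (Submodule.ker_subtype _)
    refine ⟨r ∘ₗ q, fun v => ?_⟩
    have h1 : q (f v) = f.toLinearMap.rangeRestrict v :=
      LinearMap.congr_fun hq (f.toLinearMap.rangeRestrict v)
    have h2 := LinearMap.congr_fun hr (f.toLinearMap.rangeRestrict v)
    rw [LinearMap.comp_apply, h1]
    exact congrArg Subtype.val h2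
  let s : W →ₗ[k] V := (Fintype.card G : k)⁻¹ • ∑ g : G, ρ g ∘ₗ s₀ ∘ₗ σ g⁻¹
  have hs : ∀ w, s w = (Fintype.card G : k)⁻¹ • ∑ g : G, ρ g (s₀ (σ g⁻¹ w)) := fun w => by
    simp [s]
  refine ⟨⟨s, fun h => ?_⟩, fun v => ?_⟩
  · ext w
    rw [LinearMap.comp_apply, LinearMap.comp_apply, hs, hs, map_smul, map_sum]
    congr 1
    refine Fintype.sum_equiv (Equiv.mulLeft h⁻¹) _ _ fun g => ?_
    have hinv : ∀ x, ρ h (ρ h⁻¹ x) = x := by simp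
    rw [Equiv.coe_mulLeft, mul_inv_rev, inv_inv, map_mul, map_mul, Module.End.mul_apply,
      Module.End.mul_apply, hinv]
  · change f (s (f v)) = f v
    have : ∀ g, f (ρ g (s₀ (σ g⁻¹ (f v)))) = f v := fun g => by
      rw [← f.isIntertwining, f.isIntertwining, hs₀, f.isIntertwining]
      simp
    rw [hs, ← f.toLinearMap_apply, map_smul, map_sum]
    simp only [f.toLinearMap_apply, this]
    simp [← Nat.cast_smul_eq_nsmul k, smul_smul, NeZero.ne (Fintype.card G : k)]

variable [FiniteDimensional k V] [FiniteDimensional k W]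

/-- Equality of the dimensions of `Hom_G(K, V)` and `Hom_G(K, W)` for `K ⊆ V`, together with
`dim V = dim W`, forces `V ≅ W`. Take `f : V → W` equivariant with smallest kernel `K` and `s` a
quasi-inverse. By minimality every map `K → W` lands in the range of `f`, so composing with `s` embeds
`Hom_G(K, W)` in `Hom_G(K, V)`. By dimensions the inclusion `K → V` is then `s ∘ φ` for some `φ`, and
`φ = f ∘ s ∘ φ = 0`, so `K = 0`. -/
theorem exists_equiv_of_finrank_hom [NeZero (Fintype.card G : k)]
    (ρ : Representation k G V) (σ : Representation k G W)
    (hdim : Module.finrank k V = Module.finrank k W)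
    (H : ∀ K : Subrepresentation ρ, Module.finrank k (IntertwiningMap K.toRepresentation ρ) =
      Module.finrank k (IntertwiningMap K.toRepresentation σ)) :
    Nonempty (Representation.Equiv ρ σ) := by
  obtain ⟨f, -, hmin⟩ := (measure fun f : IntertwiningMap ρ σ =>
    Module.finrank k (LinearMap.ker f.toLinearMap)).wf.has_min Set.univ ⟨0, trivial⟩
  obtain ⟨s, hs⟩ := exists_quasiInverse ρ σ f
  have hmax : ∀ (φ : IntertwiningMap f.ker.toRepresentation σ) x, f (s (φ x)) = φ x := by
    intro φ
    have hmem : ∀ v, (LinearMap.id - s.toLinearMap ∘ₗ f.toLinearMap : V →ₗ[k] V) v ∈ f.ker.toSubmodule := by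
      intro v
      change f (v - s (f v)) = 0
      rw [map_sub, hs, sub_self]
    let π : IntertwiningMap ρ f.ker.toRepresentation :=
      ⟨(LinearMap.id - s.toLinearMap ∘ₗ f.toLinearMap).codRestrict f.ker.toSubmodule hmem, by
        intro g
        ext v
        change ρ g v - s (f (ρ g v)) = ρ g (v - s (f v))
        rw [map_sub, f.isIntertwining, s.isIntertwining]⟩
    have hπ : ∀ v, ((π v : f.ker.toSubmodule) : V) = v - s (f v) := fun v => rfl
    -- Were the component of `φ` outside the range of `f` nonzero, adding it on `ker f` would
    -- shrink the kernel.
    let ψ : IntertwiningMap ρ σ := f + (IntertwiningMap.id σ - f.comp s).comp (φ.comp π)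
    have hψ : ∀ v, ψ v = f v + (φ (π v) - f (s (φ (π v)))) := fun v => rfl
    have hle : LinearMap.ker ψ.toLinearMap ≤ LinearMap.ker f.toLinearMap := by
      intro v hv
      have h0 : ψ v = 0 := hv
      have h1 := congrArg (fun w => f (s w)) h0
      simp only [hψ, map_add, map_sub, map_zero, hs, sub_self, add_zero] at h1
      exact h1
    have heq := Submodule.eq_of_le_of_finrank_le hle (not_lt.1 (hmin ψ trivial))
    intro x
    have hx : f (x : V) = 0 := x.2
    have h0 : ψ x = 0 := by
      have : (x : V) ∈ LinearMap.ker ψ.toLinearMap := heq ▸ x.2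
      exact this
    have hπx : π x = x := Subtype.ext (by rw [hπ, hx]; simp)
    rw [hψ, hx, hπx, zero_add, sub_eq_zero] at h0
    exact h0.symm
  let Φ : IntertwiningMap f.ker.toRepresentation σ →ₗ[k] IntertwiningMap f.ker.toRepresentation ρ :=
    { toFun φ := s.comp φ
      map_add' _ _ := by ext; simp
      map_smul' _ _ := by ext; simp }
  have hΦ : Function.Injective Φ := by
    intro φ ψ h
    ext x
    have := DFunLike.congr_fun h x
    change s (φ x) = s (ψ x) at this
    change φ x = ψ x
    rw [← hmax φ, this, hmax ψ]
  have hsurj : Function.Surjective Φ :=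
    (LinearMap.injective_iff_surjective_of_finrank_eq_finrank (H f.ker).symm).1 hΦ
  obtain ⟨φ, hφ⟩ := hsurj ⟨f.ker.toSubmodule.subtype, fun g => by ext; rfl⟩
  have hinj : Function.Injective f.toLinearMap := by
    rw [← LinearMap.ker_eq_bot, eq_bot_iff]
    intro v hv
    have h1 : s (φ ⟨v, hv⟩) = v := DFunLike.congr_fun hφ ⟨v, hv⟩
    have h2 : φ ⟨v, hv⟩ = 0 := by rw [← hmax φ, h1]; exact hv
    rw [h2, map_zero] at h1
    exact h1.symm
  exact ⟨IntertwiningMap.ofBijective f ⟨hinj,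
    (LinearMap.injective_iff_surjective_of_finrank_eq_finrank hdim).1 hinj⟩⟩

theorem finrank_hom_of_regular [CharZero k] {U : Type} [AddCommGroup U] [Module k U]
    [FiniteDimensional k U] (τ : Representation k G U) (ρ : Representation k G V)
    (hdim : Module.finrank k V = Fintype.card G) (htr : ∀ g, g ≠ 1 → ρ.character g = 0) :
    Module.finrank k (IntertwiningMap τ ρ) = Module.finrank k U := by
  have hne : (Nat.card G : k) ≠ 0 := by simp
  let : Invertible (Nat.card G : k) := invertibleOfNonzero hne
  have h := card_inv_mul_sum_char_mul_char_eq_finrank τ ρ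
  rw [Finset.sum_eq_single 1 (fun g _ hg => by rw [htr g hg, zero_mul]) (by simp), char_one,
    inv_one, char_one, hdim, ← Nat.card_eq_fintype_card, inv_mul_cancel_left₀ hne] at h
  exact_mod_cast h.symm

theorem exists_equiv_leftRegular [CharZero k] (ρ : Representation k G V)
    (hdim : Module.finrank k V = Fintype.card G) (htr : ∀ g, g ≠ 1 → ρ.character g = 0) :
    Nonempty (Representation.Equiv ρ (Representation.ofMulAction k G G)) := by
  let b : Module.Basis G k (MonoidAlgebra k G) := ⟨MonoidAlgebra.coeffLinearEquiv k⟩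
  have hb : ∀ g, b g = MonoidAlgebra.single g 1 := fun g => rfl
  have hdimL : Module.finrank k (MonoidAlgebra k G) = Fintype.card G := Module.finrank_eq_card_basis b
  have : FiniteDimensional k (MonoidAlgebra k G) := .of_basis b
  have htrL : ∀ g : G, g ≠ 1 → (Representation.ofMulAction k G G).character g = 0 := by
    classical
    intro g hg
    rw [Representation.character, LinearMap.trace_eq_matrix_trace k b, Matrix.trace]
    refine Finset.sum_eq_zero fun h _ => ?_
    rw [Matrix.diag_apply, LinearMap.toMatrix_apply, hb, ofMulAction_single]
    change (MonoidAlgebra.single (g • h) (1 : k)).coeff h = 0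
    simp [MonoidAlgebra.coeff_single, hg]
  have : NeZero (Fintype.card G : k) := ⟨by simp⟩
  exact exists_equiv_of_finrank_hom ρ _ (hdim.trans hdimL.symm) fun K => by
    rw [finrank_hom_of_regular _ ρ hdim htr, finrank_hom_of_regular _ _ hdimL htrL]
end

/-! ### Polynomials over symmetric polynomials -/

section
open MvPolynomial
variable (n : ℕ)

/-- The permutation of variables, as an action by endomorphisms of `ℂ[z₁,…,zₙ]` that are linear over
the symmetric polynomials. -/
noncomputable def permAction :
    Equiv.Perm (Fin n) →* (MvPolynomial (Fin n) ℂ →ₐ[symmetricSubalgebra (Fin n) ℂ]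
      MvPolynomial (Fin n) ℂ) where
  toFun σ :=
    { (rename σ : MvPolynomial (Fin n) ℂ →ₐ[ℂ] MvPolynomial (Fin n) ℂ) with
      commutes' := fun r => r.2 σ }
  map_one' := by
    refine AlgHom.ext fun p => ?_
    exact rename_id_apply p
  map_mul' σ τ := by
    refine AlgHom.ext fun p => ?_
    exact (rename_rename τ σ p).symm

theorem permAction_apply (σ : Equiv.Perm (Fin n)) (p : MvPolynomial (Fin n) ℂ) :
    permAction n σ p = rename σ p := rfl

theorem permAction_injective : Function.Injective (permAction n) := by
  intro σ τ h
  ext i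
  have := DFunLike.congr_fun h (X i)
  simp only [permAction_apply, rename_X] at this
  rw [X_injective this]

open Polynomial in
/-- `∏ (X - zᵢ)` has symmetric coefficients. -/
theorem exists_symmetric_lift :
    ∃ P : (symmetricSubalgebra (Fin n) ℂ)[X], P.Monic ∧
      P.map (algebraMap _ (MvPolynomial (Fin n) ℂ)) =
        ∏ i, (Polynomial.X - Polynomial.C (MvPolynomial.X i)) := by
  set Q : (MvPolynomial (Fin n) ℂ)[X] :=
    ∏ i, (Polynomial.X - Polynomial.C (MvPolynomial.X i)) with hQ
  have hQm : Q.Monic := monic_prod_of_monic _ _ fun i _ => monic_X_sub_C _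
  have hlift : Q ∈ Polynomial.lifts
      (algebraMap (symmetricSubalgebra (Fin n) ℂ) (MvPolynomial (Fin n) ℂ)) := by
    rw [Polynomial.lifts_iff_coeff_lifts]
    intro k
    refine ⟨⟨Q.coeff k, fun σ => ?_⟩, rfl⟩
    have h : Q.map (rename σ : MvPolynomial (Fin n) ℂ →ₐ[ℂ] _).toRingHom = Q := by
      rw [hQ, Polynomial.map_prod]
      refine Fintype.prod_equiv σ _ _ fun i => ?_
      simp
    conv_rhs => rw [← h]
    rw [Polynomial.coeff_map]
    rfl
  obtain ⟨P, hP, -, hPm⟩ := Polynomial.lifts_and_degree_eq_and_monic hlift hQm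
  exact ⟨P, hPm, hP⟩

/-- `ℂ[z₁,…,zₙ]` is free of rank `n!` over the symmetric polynomials; the basis is indexed by `Sₙ` only
for the sake of cardinality, with no relation to the action. -/
theorem exists_basis : Nonempty (Module.Basis (Equiv.Perm (Fin n))
    (symmetricSubalgebra (Fin n) ℂ) (MvPolynomial (Fin n) ℂ)) := by
  obtain ⟨P, hPm, hP⟩ := exists_symmetric_lift n
  have hgen : Algebra.adjoin (symmetricSubalgebra (Fin n) ℂ)
      (Set.range (X : Fin n → MvPolynomial (Fin n) ℂ)) = ⊤ := by
    have hle : Algebra.adjoin ℂ (Set.range (X : Fin n → MvPolynomial (Fin n) ℂ)) ≤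
        (Algebra.adjoin (symmetricSubalgebra (Fin n) ℂ)
          (Set.range (X : Fin n → MvPolynomial (Fin n) ℂ))).restrictScalars ℂ :=
      Algebra.adjoin_le Algebra.subset_adjoin
    rw [adjoin_range_X] at hle
    exact eq_top_iff.2 fun x _ => hle (Algebra.mem_top (x := x))
  obtain ⟨ι, _, b, hcard, hb⟩ := exists_span_factorial n _ _ P X hPm hP hgen
  have e : Equiv.Perm (Fin n) ≃ ι := Fintype.equivOfCardEq (by
    rw [hcard, Fintype.card_perm, Fintype.card_fin])
  have hb' : Submodule.span (symmetricSubalgebra (Fin n) ℂ) (Set.range (b ∘ e)) = ⊤ := by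
    rw [e.surjective.range_comp, hb]
  exact ⟨.mk (linearIndependent_of_span (permAction n) (permAction_injective n)
    Subtype.val_injective _ hb') hb'.ge⟩

variable {n}

/-- Evaluation of symmetric polynomials at `σₛ = aₛ`, which exists by the fundamental theorem of
symmetric polynomials, agrees with reduction modulo `I`. -/
theorem exists_evalHom (a : Fin n → ℂ) (I : Ideal (MvPolynomial (Fin n) ℂ))
    (hI : I = Ideal.span (Set.range fun s : Fin n => esymm (Fin n) ℂ ((s : ℕ) + 1) - C (a s))) :
    ∃ φ : symmetricSubalgebra (Fin n) ℂ →ₐ[ℂ] ℂ,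
      (∀ c : symmetricSubalgebra (Fin n) ℂ, (c : MvPolynomial (Fin n) ℂ) - C (φ c) ∈ I) ∧
      ∀ s : Fin n, φ ⟨esymm (Fin n) ℂ ((s : ℕ) + 1), esymm_isSymmetric _ _ _⟩ = a s := by
  let e := esymmAlgEquiv (Fin n) ℂ (Fintype.card_fin n)
  refine ⟨(aeval a).comp e.symm.toAlgHom, fun c => ?_, fun s => ?_⟩
  · obtain ⟨q, rfl⟩ := e.surjective c
    have h : ((Ideal.Quotient.mkₐ ℂ I).comp (symmetricSubalgebra (Fin n) ℂ).val).comp e.toAlgHom =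
        (Algebra.ofId ℂ (MvPolynomial (Fin n) ℂ ⧸ I)).comp (aeval a) := by
      ext s
      have h1 : (e (X s) : MvPolynomial (Fin n) ℂ) = esymm (Fin n) ℂ ((s : ℕ) + 1) := by
        simp [e, esymmAlgHom_apply]
      have h2 : Ideal.Quotient.mk I (esymm (Fin n) ℂ ((s : ℕ) + 1)) =
          Ideal.Quotient.mk I (C (a s)) := by
        rw [Ideal.Quotient.eq, hI]
        exact Ideal.subset_span ⟨s, rfl⟩
      simp only [AlgHom.comp_apply, aeval_X]
      change Ideal.Quotient.mk I (e (X s) : MvPolynomial (Fin n) ℂ) = _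
      rw [h1, h2]
      rfl
    have hq := AlgHom.congr_fun h q
    rw [← Ideal.Quotient.eq]
    simp only [AlgHom.comp_apply, AlgEquiv.toAlgHom_apply, AlgEquiv.symm_apply_apply]
    exact hq
  · have h := esymmAlgEquiv_symm_apply (σ := Fin n) (R := ℂ) (Fintype.card_fin n) s
    simp only [AlgHom.comp_apply]
    change aeval a ((esymmAlgEquiv (Fin n) ℂ (Fintype.card_fin n)).symm _) = _
    rw [h, aeval_X]

/-- A basis over the symmetric polynomials reduces to a basis of the fiber `ℂ[z₁,…,zₙ]/I`: taking
coordinates and then evaluating them by `φ` is a surjection onto `ℂ^(n!)` with kernel `I`. -/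
theorem exists_fiber_coordinates (a : Fin n → ℂ) (I : Ideal (MvPolynomial (Fin n) ℂ))
    (hI : I = Ideal.span (Set.range fun s : Fin n => esymm (Fin n) ℂ ((s : ℕ) + 1) - C (a s)))
    (b : Module.Basis (Equiv.Perm (Fin n))
      (symmetricSubalgebra (Fin n) ℂ) (MvPolynomial (Fin n) ℂ)) :
    ∃ (φ : symmetricSubalgebra (Fin n) ℂ →ₐ[ℂ] ℂ)
      (B : Module.Basis (Equiv.Perm (Fin n)) ℂ (MvPolynomial (Fin n) ℂ ⧸ I)),
      ∀ p i, B.repr (Ideal.Quotient.mk I p) i = φ (b.repr p i) := by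
  obtain ⟨φ, hφI, hφ⟩ := exists_evalHom a I hI
  let Ψ : MvPolynomial (Fin n) ℂ →ₗ[ℂ] (Equiv.Perm (Fin n) → ℂ) :=
    { toFun p i := φ (b.repr p i)
      map_add' p q := by ext i; simp
      map_smul' c p := by
        ext i
        have : c • p = (algebraMap ℂ (symmetricSubalgebra (Fin n) ℂ) c) • p := by
          rw [algebraMap_smul]
        rw [this, map_smul, Finsupp.smul_apply, smul_eq_mul, map_mul, AlgHom.commutes]
        rfl }
  have hΨ : ∀ p i, Ψ p i = φ (b.repr p i) := fun _ _ => rfl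
  have hΨc : ∀ (c : symmetricSubalgebra (Fin n) ℂ) p, Ψ (c • p) = φ c • Ψ p := by
    intro c p
    ext i
    simp [hΨ]
  have hker : LinearMap.ker Ψ = I.restrictScalars ℂ := by
    apply le_antisymm
    · intro p hp
      rw [Submodule.restrictScalars_mem, ← b.sum_repr p]
      refine sum_mem fun i _ => ?_
      have h0 : φ (b.repr p i) = 0 := congrFun (LinearMap.mem_ker.1 hp) i
      have h1 := hφI (b.repr p i)
      rw [h0, C_0, sub_zero] at h1
      rw [Algebra.smul_def]
      exact I.mul_mem_right _ h1
    · intro p hp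
      rw [Submodule.restrictScalars_mem, hI] at hp
      -- Vanishing on all multiples of `p` is the statement preserved by ideal operations.
      suffices h : ∀ q, Ψ (q * p) = 0 by
        rw [LinearMap.mem_ker, ← h 1, one_mul]
      induction hp using Submodule.span_induction with
      | mem x hx =>
        obtain ⟨s, rfl⟩ := hx
        intro q
        have h : q * (esymm (Fin n) ℂ ((s : ℕ) + 1) - C (a s)) =
            (⟨esymm (Fin n) ℂ ((s : ℕ) + 1), esymm_isSymmetric _ _ _⟩ :
              symmetricSubalgebra (Fin n) ℂ) • q - a s • q := by
          rw [Algebra.smul_def, smul_eq_C_mul, mul_sub, mul_comm q, mul_comm q]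
          rfl
        change Ψ (q * (esymm (Fin n) ℂ ((s : ℕ) + 1) - C (a s))) = 0
        rw [h, map_sub, hΨc, hφ, map_smul, sub_self]
      | zero => simp
      | add x y _ _ hx hy => intro q; rw [mul_add, map_add, hx, hy, add_zero]
      | smul r x _ hx => intro q; rw [smul_eq_mul, ← mul_assoc, hx]
  have hsurj : Function.Surjective Ψ := by
    intro v
    refine ⟨∑ i, algebraMap ℂ (symmetricSubalgebra (Fin n) ℂ) (v i) • b i, ?_⟩
    ext j
    rw [hΨ, b.repr_sum_self, AlgHom.commutes]
    rfl
  let E : (MvPolynomial (Fin n) ℂ ⧸ I) ≃ₗ[ℂ] (Equiv.Perm (Fin n) → ℂ) :=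
    (Submodule.quotEquivOfEq (I.restrictScalars ℂ) _ hker.symm).trans
      (Ψ.quotKerEquivOfSurjective hsurj)
  refine ⟨φ, .ofEquivFun E, fun p i => ?_⟩
  rfl


/-- The representation of `Sₙ` on `ℂ[z₁,…,zₙ]/I` induced by permuting the variables, for an
invariant ideal `I`. -/
noncomputable def fiberRep (I : Ideal (MvPolynomial (Fin n) ℂ))
    (h : ∀ σ : Equiv.Perm (Fin n), ∀ p ∈ I, rename σ p ∈ I) :
    Representation ℂ (Equiv.Perm (Fin n)) (MvPolynomial (Fin n) ℂ ⧸ I) where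
  toFun σ := (Ideal.quotientMapₐ I (rename σ) (h σ)).toLinearMap
  map_one' := by
    refine LinearMap.ext fun x => ?_
    obtain ⟨p, rfl⟩ := Ideal.Quotient.mk_surjective x
    exact congrArg (Ideal.Quotient.mk I) (rename_id_apply p)
  map_mul' σ τ := by
    refine LinearMap.ext fun x => ?_
    obtain ⟨p, rfl⟩ := Ideal.Quotient.mk_surjective x
    exact congrArg (Ideal.Quotient.mk I) (rename_rename τ σ p).symm

theorem fiberRep_mk (I : Ideal (MvPolynomial (Fin n) ℂ))
    (h : ∀ σ : Equiv.Perm (Fin n), ∀ p ∈ I, rename σ p ∈ I) (σ : Equiv.Perm (Fin n))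
    (p : MvPolynomial (Fin n) ℂ) :
    fiberRep I h σ (Ideal.Quotient.mk I p) = Ideal.Quotient.mk I (rename σ p) := rfl

end

/-- For `a ∈ ℂⁿ`, the quotient of `ℂ[z₁,…,zₙ]` by the ideal generated by
`σₛ(z) − aₛ`, `s = 1,…,n`, is isomorphic, as a representation of `Sₙ` (acting by permuting
the variables), to the regular representation `ℂ[Sₙ]`. -/
theorem quotient_by_symmetric_fiber_iso_regular (n : ℕ) (a : Fin n → ℂ)
    (I : Ideal (MvPolynomial (Fin n) ℂ))
    (hI : I = Ideal.span (Set.range fun s : Fin n =>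
      MvPolynomial.esymm (Fin n) ℂ ((s : ℕ) + 1) - MvPolynomial.C (a s))) :
    ∃ e : (MvPolynomial (Fin n) ℂ ⧸ I) ≃ₗ[ℂ] MonoidAlgebra ℂ (Equiv.Perm (Fin n)),
      ∀ (σ : Equiv.Perm (Fin n)) (p : MvPolynomial (Fin n) ℂ),
        e (Ideal.Quotient.mk I (MvPolynomial.rename σ p)) =
          Representation.ofMulAction ℂ (Equiv.Perm (Fin n)) (Equiv.Perm (Fin n)) σ
            (e (Ideal.Quotient.mk I p)) := by
  have hinv : ∀ σ : Equiv.Perm (Fin n), ∀ p ∈ I, MvPolynomial.rename σ p ∈ I := by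
    intro σ
    suffices h : I ≤ I.comap (MvPolynomial.rename σ : MvPolynomial (Fin n) ℂ →ₐ[ℂ] _) from
      fun p hp => h hp
    conv_lhs => rw [hI]
    rw [Ideal.span_le]
    rintro _ ⟨s, rfl⟩
    change MvPolynomial.rename σ (_ - _) ∈ I
    rw [map_sub, MvPolynomial.rename_C, MvPolynomial.esymm_isSymmetric, hI]
    exact Ideal.subset_span ⟨s, rfl⟩
  obtain ⟨b⟩ := exists_basis n
  obtain ⟨φ, B, hB⟩ := exists_fiber_coordinates a I hI b
  have hBb : ∀ i, B i = Ideal.Quotient.mk I (b i) := by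
    intro i
    refine B.repr.injective (Finsupp.ext fun j => ?_)
    rw [hB, B.repr_self, b.repr_self]
    simp [Finsupp.single_apply, apply_ite φ]
  have : FiniteDimensional ℂ (MvPolynomial (Fin n) ℂ ⧸ I) := .of_basis B
  obtain ⟨e⟩ := exists_equiv_leftRegular (fiberRep I hinv) (Module.finrank_eq_card_basis B) (by
    intro σ hσ
    have htr := trace_eq_zero (permAction n) (permAction_injective n)
      Subtype.val_injective b σ hσ
    rw [Representation.character, LinearMap.trace_eq_matrix_trace ℂ B, ← map_zero φ, ← htr,
      Matrix.trace, Matrix.trace, map_sum]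
    refine Finset.sum_congr rfl fun i _ => ?_
    rw [Matrix.diag_apply, Matrix.diag_apply, LinearMap.toMatrix_apply, LinearMap.toMatrix_apply,
      hBb, fiberRep_mk, hB]
    rfl)
  exact ⟨e.toLinearEquiv, fun σ p =>
    Representation.IntertwiningMap.isIntertwining _ _ e.toIntertwiningMap σ
      (Ideal.Quotient.mk I p)⟩
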